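/- Suppose rank Q_N = n (the model is causal at time N) and set x̂_N = Q_N⁺r_N. Then the reachable section of the a posteriori set is the ellipsoid P_N = {x ∈ ℝⁿ : (Q_N x, x) − 2(Q_N x̂_N, x) + α_N ≤ 1}. -/

import Mathlib

/-!
The proof is forward dynamic programming. Let `J_k(x)` be the left-hand side of the constraint
for data up to time `k`, and let `V_k(v) = (Q_k v, v) - 2 (r_k, v) + α_k`. The claim is that
`V_k(v)` is the minimum of `J_k` over all sequences with `x_k = v`, and that it is attained
(`valueFn_le_cost`, `exists_cost_eq_valueFn`); then `v` belongs to the section `P_N` if and only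
if `V_N(v) ≤ 1`.

The induction step minimises `u ↦ V_k(u) + (S_k(F_{k+1}v - C_k u), F_{k+1}v - C_k u)`, which is the
quadratic polynomial `(P_k u, u) - 2 (b, u) + c` with `b = r_k + C_k' S_k F_{k+1} v`. Being attained
values of the nonnegative cost, the numbers `V_k(u)` are nonnegative, so this polynomial is bounded
below. A quadratic polynomial with symmetric matrix `P` that is bounded below has
`P` positive semidefinite and `P P⁺ b = b`, so its minimum is attained at `P⁺ b` and equals
`c - (P⁺ b, b)`; expanding in `v` gives exactly the recursions for `Q`, `r` and `α`.

The same fact applied to `V_N ≥ 0` gives `Q_N Q_N⁺ r_N = r_N`, i.e. `Q_N x̂_N = r_N`, which turns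
`V_N` into the expression of the theorem.
-/

open Matrix
open scoped ENNReal RealInnerProductSpace

/-- `B` is the Moore–Penrose pseudoinverse of `A`. -/
def IsMoorePenrose {ι κ : Type*} [Fintype ι] [Fintype κ]
    (A : Matrix ι κ ℝ) (B : Matrix κ ι ℝ) : Prop :=
  A * B * A = A ∧ B * A * B = B ∧ (A * B)ᵀ = A * B ∧ (B * A)ᵀ = B * A

/-- The Moore–Penrose pseudoinverse `A⁺` (it exists, and is unique, for every
real matrix). -/
noncomputable def pinv {ι κ : Type*} [Fintype ι] [Fintype κ]
    (A : Matrix ι κ ℝ) : Matrix κ ι ℝ :=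
  haveI := Classical.propDecidable (∃ B, IsMoorePenrose A B)
  if h : ∃ B, IsMoorePenrose A B then h.choose else 0

/-- The linear map on Euclidean spaces induced by a matrix. -/
noncomputable def matVec {ι κ : Type*} [Fintype ι] [Fintype κ] [DecidableEq κ]
    (A : Matrix ι κ ℝ) (v : EuclideanSpace ℝ κ) : EuclideanSpace ℝ ι :=
  Matrix.toEuclideanLin A v

/-- The recursively defined matrices `Q_k`:
`Q_0 = F₀'SF₀ + H₀'R₀H₀`,
`Q_{k+1} = H_{k+1}'R_{k+1}H_{k+1} + F_{k+1}'[S_k − S_kC_kP_k⁺C_k'S_k]F_{k+1}`,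
with `P_k = Q_k + C_k'S_kC_k`. -/
noncomputable def Qmat {m n p : ℕ} (F C : ℕ → Matrix (Fin m) (Fin n) ℝ)
    (Hm : ℕ → Matrix (Fin p) (Fin n) ℝ) (S0 : Matrix (Fin m) (Fin m) ℝ)
    (S : ℕ → Matrix (Fin m) (Fin m) ℝ) (R : ℕ → Matrix (Fin p) (Fin p) ℝ) :
    ℕ → Matrix (Fin n) (Fin n) ℝ
  | 0 => (F 0)ᵀ * S0 * F 0 + (Hm 0)ᵀ * R 0 * Hm 0
  | (k+1) => (Hm (k+1))ᵀ * R (k+1) * Hm (k+1) +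
      (F (k+1))ᵀ * (S k - S k * C k *
          pinv (Qmat F C Hm S0 S R k + (C k)ᵀ * S k * C k) * (C k)ᵀ * S k) *
        F (k+1)

/-- The matrices `P_k = Q_k + C_k'S_kC_k`. -/
noncomputable def Pmat {m n p : ℕ} (F C : ℕ → Matrix (Fin m) (Fin n) ℝ)
    (Hm : ℕ → Matrix (Fin p) (Fin n) ℝ) (S0 : Matrix (Fin m) (Fin m) ℝ)
    (S : ℕ → Matrix (Fin m) (Fin m) ℝ) (R : ℕ → Matrix (Fin p) (Fin p) ℝ)
    (k : ℕ) : Matrix (Fin n) (Fin n) ℝ :=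
  Qmat F C Hm S0 S R k + (C k)ᵀ * S k * C k

/-- The recursively defined vectors `r_k`:
`r_0 = H₀'R₀y₀`, `r_{k+1} = F_{k+1}'S_kC_kP_k⁺ r_k + H_{k+1}'R_{k+1}y_{k+1}`. -/
noncomputable def rvec {m n p : ℕ} (F C : ℕ → Matrix (Fin m) (Fin n) ℝ)
    (Hm : ℕ → Matrix (Fin p) (Fin n) ℝ) (S0 : Matrix (Fin m) (Fin m) ℝ)
    (S : ℕ → Matrix (Fin m) (Fin m) ℝ) (R : ℕ → Matrix (Fin p) (Fin p) ℝ)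
    (y : ℕ → EuclideanSpace ℝ (Fin p)) :
    ℕ → EuclideanSpace ℝ (Fin n)
  | 0 => matVec ((Hm 0)ᵀ * R 0) (y 0)
  | (k+1) => matVec ((F (k+1))ᵀ * S k * C k * pinv (Pmat F C Hm S0 S R k))
        (rvec F C Hm S0 S R y k) +
      matVec ((Hm (k+1))ᵀ * R (k+1)) (y (k+1))

/-- The recursively defined numbers `α_k`:
`α_0 = (R₀y₀, y₀)`,
`α_{k+1} = α_k + (R_{k+1}y_{k+1}, y_{k+1}) − (P_k⁺ r_k, r_k)`. -/
noncomputable def alphaNum {m n p : ℕ} (F C : ℕ → Matrix (Fin m) (Fin n) ℝ)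
    (Hm : ℕ → Matrix (Fin p) (Fin n) ℝ) (S0 : Matrix (Fin m) (Fin m) ℝ)
    (S : ℕ → Matrix (Fin m) (Fin m) ℝ) (R : ℕ → Matrix (Fin p) (Fin p) ℝ)
    (y : ℕ → EuclideanSpace ℝ (Fin p)) : ℕ → ℝ
  | 0 => ⟪matVec (R 0) (y 0), y 0⟫
  | (k+1) => alphaNum F C Hm S0 S R y k +
      ⟪matVec (R (k+1)) (y (k+1)), y (k+1)⟫ -
      ⟪matVec (pinv (Pmat F C Hm S0 S R k)) (rvec F C Hm S0 S R y k),
        rvec F C Hm S0 S R y k⟫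

/-- The a posteriori set `𝓖_y`: sequences `(x_0, …, x_N)` consistent with the
model `F_{k+1}x_{k+1} − C_kx_k = f_k`, `F₀x₀ = q`, `y_k = H_kx_k + g_k` and the
constraint `(Sq,q) + Σ_{i<N}(S_if_i,f_i) + Σ_{i≤N}(R_ig_i,g_i) ≤ 1`. -/
def GySeq {m n p : ℕ} (F C : ℕ → Matrix (Fin m) (Fin n) ℝ)
    (Hm : ℕ → Matrix (Fin p) (Fin n) ℝ) (S0 : Matrix (Fin m) (Fin m) ℝ)
    (S : ℕ → Matrix (Fin m) (Fin m) ℝ) (R : ℕ → Matrix (Fin p) (Fin p) ℝ)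
    (y : ℕ → EuclideanSpace ℝ (Fin p)) (N : ℕ) :
    Set (ℕ → EuclideanSpace ℝ (Fin n)) :=
  {x | ⟪matVec S0 (matVec (F 0) (x 0)), matVec (F 0) (x 0)⟫ +
      (∑ i ∈ Finset.range N,
        ⟪matVec (S i) (matVec (F (i+1)) (x (i+1)) - matVec (C i) (x i)),
          matVec (F (i+1)) (x (i+1)) - matVec (C i) (x i)⟫) +
      (∑ i ∈ Finset.range (N+1),
        ⟪matVec (R i) (y i - matVec (Hm i) (x i)),
          y i - matVec (Hm i) (x i)⟫) ≤ 1}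

/-- The minimax a posteriori error
`σ̂(ℓ, N) = inf_a sup_{x ∈ 𝓖_y} |(ℓ, x_N) − a|`. -/
noncomputable def sigmaHatSeq {m n p : ℕ} (F C : ℕ → Matrix (Fin m) (Fin n) ℝ)
    (Hm : ℕ → Matrix (Fin p) (Fin n) ℝ) (S0 : Matrix (Fin m) (Fin m) ℝ)
    (S : ℕ → Matrix (Fin m) (Fin m) ℝ) (R : ℕ → Matrix (Fin p) (Fin p) ℝ)
    (y : ℕ → EuclideanSpace ℝ (Fin p)) (N : ℕ)
    (ℓ : EuclideanSpace ℝ (Fin n)) : ℝ≥0∞ :=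
  ⨅ (a : ℝ), ⨆ (x : ℕ → EuclideanSpace ℝ (Fin n))
      (_ : x ∈ GySeq F C Hm S0 S R y N),
    ENNReal.ofReal |⟪ℓ, x N⟫ - a|

/-! ### The pseudoinverse of a symmetric matrix -/

/-- Existence by the spectral theorem: invert the nonzero eigenvalues. -/
lemma exists_isMoorePenrose_of_isSymm {n : ℕ} {A : Matrix (Fin n) (Fin n) ℝ} (hA : Aᵀ = A) :
    ∃ B, IsMoorePenrose A B := by
  have hH : A.IsHermitian := by
    rw [Matrix.IsHermitian, Matrix.conjTranspose_eq_transpose_of_trivial, hA]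
  obtain ⟨U, d, hU, hAU⟩ : ∃ (U : Matrix (Fin n) (Fin n) ℝ) (d : Fin n → ℝ),
      Uᵀ * U = 1 ∧ A = U * diagonal d * Uᵀ := by
    refine ⟨hH.eigenvectorUnitary, hH.eigenvalues, ?_, ?_⟩
    · have := Unitary.coe_star_mul_self hH.eigenvectorUnitary
      rwa [Matrix.star_eq_conjTranspose, Matrix.conjTranspose_eq_transpose_of_trivial] at this
    · have := hH.spectral_theorem
      rw [Unitary.conjStarAlgAut_apply, Matrix.star_eq_conjTranspose,
        Matrix.conjTranspose_eq_transpose_of_trivial] at this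
      exact this
  have hmul : ∀ a b : Fin n → ℝ, (U * diagonal a * Uᵀ) * (U * diagonal b * Uᵀ)
      = U * diagonal (a * b) * Uᵀ := by
    intro a b
    calc _ = U * diagonal a * (Uᵀ * U) * diagonal b * Uᵀ := by simp only [Matrix.mul_assoc]
      _ = U * (diagonal a * diagonal b) * Uᵀ := by
        rw [hU]; simp only [Matrix.mul_assoc, Matrix.mul_one]
      _ = _ := by rw [diagonal_mul_diagonal]; rfl
  have htr : ∀ a : Fin n → ℝ, (U * diagonal a * Uᵀ)ᵀ = U * diagonal a * Uᵀ := by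
    intro a
    simp [Matrix.transpose_mul, Matrix.mul_assoc]
  -- The junk value `0⁻¹ = 0` makes `d⁻¹` invert exactly the nonzero eigenvalues.
  refine ⟨U * diagonal d⁻¹ * Uᵀ, ?_, ?_, ?_, ?_⟩
  · rw [hAU, hmul, hmul]; congr 3; ext i; simp
  · rw [hAU, hmul, hmul]; congr 3; ext i
    by_cases hi : d i = 0 <;> simp [hi]
  · rw [hAU, hmul, htr]
  · rw [hAU, hmul, htr]

lemma isMoorePenrose_pinv {n : ℕ} {A : Matrix (Fin n) (Fin n) ℝ} (hA : Aᵀ = A) :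
    IsMoorePenrose A (pinv A) := by
  have h := exists_isMoorePenrose_of_isSymm hA
  rw [pinv, dif_pos h]
  exact h.choose_spec

lemma IsMoorePenrose.unique {n : ℕ} {A B D : Matrix (Fin n) (Fin n) ℝ}
    (hB : IsMoorePenrose A B) (hD : IsMoorePenrose A D) : B = D := by
  obtain ⟨b1, b2, b3, b4⟩ := hB
  obtain ⟨d1, d2, d3, d4⟩ := hD
  -- Both `A B = A D` and `B A = D A` follow by transposing a product of two symmetric projections.
  have hl : A * B = A * D := by
    calc A * B = (A * B)ᵀ := b3.symm
      _ = ((A * D) * (A * B))ᵀ := by rw [← Matrix.mul_assoc, d1]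
      _ = (A * B) * (A * D) := by rw [Matrix.transpose_mul, b3, d3]
      _ = A * D := by rw [← Matrix.mul_assoc, b1]
  have hr : B * A = D * A := by
    calc B * A = (B * A)ᵀ := b4.symm
      _ = ((B * A) * (D * A))ᵀ := by rw [Matrix.mul_assoc, ← Matrix.mul_assoc A, d1]
      _ = (D * A) * (B * A) := by rw [Matrix.transpose_mul, b4, d4]
      _ = D * A := by rw [Matrix.mul_assoc, ← Matrix.mul_assoc A, b1]
  calc B = B * A * B := b2.symm
    _ = D * A * D := by rw [hr, Matrix.mul_assoc, hl, Matrix.mul_assoc]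
    _ = D := d2

lemma pinv_transpose {n : ℕ} {A : Matrix (Fin n) (Fin n) ℝ} (hA : Aᵀ = A) :
    (pinv A)ᵀ = pinv A := by
  have h := isMoorePenrose_pinv hA
  refine IsMoorePenrose.unique (A := A) ?_ h
  obtain ⟨h1, h2, h3, h4⟩ := h
  refine ⟨?_, ?_, ?_, ?_⟩
  · simpa [Matrix.transpose_mul, hA, Matrix.mul_assoc] using congrArg Matrix.transpose h1
  · simpa [Matrix.transpose_mul, hA, Matrix.mul_assoc] using congrArg Matrix.transpose h2
  · rw [Matrix.transpose_mul, Matrix.transpose_transpose, hA]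
    rw [← h4, Matrix.transpose_mul, hA]
  · rw [Matrix.transpose_mul, Matrix.transpose_transpose, hA]
    rw [← h3, Matrix.transpose_mul, hA]

/-! ### Matrices acting on Euclidean spaces -/

section matVecLemmas

variable {a b c : ℕ}

lemma matVec_mul (A : Matrix (Fin a) (Fin b) ℝ) (B : Matrix (Fin b) (Fin c) ℝ)
    (v : EuclideanSpace ℝ (Fin c)) : matVec (A * B) v = matVec A (matVec B v) := by
  simp [matVec, Matrix.toLpLin_mul_same]

lemma matVec_addMat (A B : Matrix (Fin a) (Fin b) ℝ) (v : EuclideanSpace ℝ (Fin b)) :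
    matVec (A + B) v = matVec A v + matVec B v := by
  simp [matVec]

lemma matVec_subMat (A B : Matrix (Fin a) (Fin b) ℝ) (v : EuclideanSpace ℝ (Fin b)) :
    matVec (A - B) v = matVec A v - matVec B v := by
  simp [matVec]

lemma matVec_add (A : Matrix (Fin a) (Fin b) ℝ) (u v : EuclideanSpace ℝ (Fin b)) :
    matVec A (u + v) = matVec A u + matVec A v := map_add _ _ _

lemma matVec_sub (A : Matrix (Fin a) (Fin b) ℝ) (u v : EuclideanSpace ℝ (Fin b)) :
    matVec A (u - v) = matVec A u - matVec A v := map_sub _ _ _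

lemma matVec_smul (A : Matrix (Fin a) (Fin b) ℝ) (t : ℝ) (v : EuclideanSpace ℝ (Fin b)) :
    matVec A (t • v) = t • matVec A v := map_smul _ _ _

lemma inner_matVec_transpose (A : Matrix (Fin a) (Fin b) ℝ) (u : EuclideanSpace ℝ (Fin a))
    (v : EuclideanSpace ℝ (Fin b)) : ⟪matVec Aᵀ u, v⟫ = ⟪u, matVec A v⟫ := by
  have h := Matrix.toEuclideanLin_conjTranspose_eq_adjoint A
  rw [Matrix.conjTranspose_eq_transpose_of_trivial] at h
  simp only [matVec]
  rw [h, LinearMap.adjoint_inner_left]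

lemma inner_matVec_of_symm {A : Matrix (Fin a) (Fin a) ℝ} (hA : Aᵀ = A)
    (u v : EuclideanSpace ℝ (Fin a)) : ⟪matVec A u, v⟫ = ⟪u, matVec A v⟫ := by
  conv_lhs => rw [← hA]
  exact inner_matVec_transpose A u v

lemma Matrix.PosDef.transpose_eq {A : Matrix (Fin a) (Fin a) ℝ} (hA : A.PosDef) : Aᵀ = A := by
  have h := hA.isHermitian
  rwa [Matrix.IsHermitian, Matrix.conjTranspose_eq_transpose_of_trivial] at h

lemma Matrix.PosDef.inner_matVec_nonneg {A : Matrix (Fin a) (Fin a) ℝ} (hA : A.PosDef)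
    (v : EuclideanSpace ℝ (Fin a)) : 0 ≤ ⟪matVec A v, v⟫ := by
  have h := hA.posSemidef.dotProduct_mulVec_nonneg v.ofLp
  simpa [matVec, EuclideanSpace.inner_eq_star_dotProduct, Matrix.toLpLin_apply] using h

end matVecLemmas

/-! ### Quadratic polynomials bounded below -/

section quadratic

variable {n : ℕ} {P : Matrix (Fin n) (Fin n) ℝ} {b : EuclideanSpace ℝ (Fin n)} {c : ℝ}

lemma quad_posSemidef
    (h : ∀ u, 0 ≤ ⟪matVec P u, u⟫ - 2 * ⟪b, u⟫ + c) (u : EuclideanSpace ℝ (Fin n)) :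
    0 ≤ ⟪matVec P u, u⟫ := by
  by_contra! hneg
  set p := ⟪matVec P u, u⟫ with hp
  set β := ⟪b, u⟫ with hβ
  have key : ∀ t : ℝ, 0 ≤ t ^ 2 * p - 2 * t * β + c := by
    intro t
    have := h (t • u)
    rw [matVec_smul, inner_smul_left, inner_smul_right, inner_smul_right, ← hp, ← hβ] at this
    simp only [conj_trivial] at this
    linarith
  -- Averaging over `t` and `-t` removes the linear term, leaving `t² p + c ≥ 0`.
  have h1 : ∀ t : ℝ, 0 ≤ t ^ 2 * p + c := fun t => by
    have h2 := key t
    have h3 := key (-t)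
    nlinarith
  have h0 := h1 0
  have hs : 0 ≤ (c + 1) / (-p) := div_nonneg (by linarith) (by linarith)
  have h2 := h1 (Real.sqrt ((c + 1) / (-p)))
  rw [Real.sq_sqrt hs] at h2
  have h3 : (c + 1) / (-p) * p = -(c + 1) := by
    rw [div_neg, neg_mul, div_mul_cancel₀ _ hneg.ne]
  linarith

/-- A quadratic polynomial bounded below has its linear coefficient in the range of `P`. -/
lemma quad_mem_range (hP : Pᵀ = P)
    (h : ∀ u, 0 ≤ ⟪matVec P u, u⟫ - 2 * ⟪b, u⟫ + c) :
    matVec P (matVec (pinv P) b) = b := by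
  obtain ⟨h1, -, h3, -⟩ := isMoorePenrose_pinv hP
  -- `w` is the component of `b` in the kernel of `P`.
  set w := b - matVec (P * pinv P) b with hw
  have hPP : P * (P * pinv P) = P := by
    have := congrArg Matrix.transpose h1
    rwa [Matrix.transpose_mul, h3, hP] at this
  have hPw : matVec P w = 0 := by
    rw [hw, matVec_sub, ← matVec_mul, hPP, sub_self]
  have hww : ⟪b, w⟫ = ⟪w, w⟫ := by
    have h0 : ⟪matVec (P * pinv P) b, w⟫ = 0 := by
      rw [matVec_mul, inner_matVec_of_symm hP, hPw, inner_zero_right]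
    conv_rhs => rw [hw, inner_sub_left]
    rw [← hw, h0, sub_zero]
  have hzero : ⟪w, w⟫ = 0 := by
    by_contra hne
    have := h (((c + 1) / (2 * ⟪w, w⟫)) • w)
    rw [matVec_smul, hPw, smul_zero, inner_zero_left, inner_smul_right, hww] at this
    have h4 : (c + 1) / (2 * ⟪w, w⟫) * ⟪w, w⟫ = (c + 1) / 2 := by
      field_simp
    rw [h4] at this
    linarith
  have hw0 : w = 0 := inner_self_eq_zero.mp hzero
  rw [← matVec_mul]
  exact (sub_eq_zero.mp (hw ▸ hw0)).symm

lemma quad_value_at_pinv (hP : Pᵀ = P)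
    (h : ∀ u, 0 ≤ ⟪matVec P u, u⟫ - 2 * ⟪b, u⟫ + c) :
    ⟪matVec P (matVec (pinv P) b), matVec (pinv P) b⟫ - 2 * ⟪b, matVec (pinv P) b⟫ + c
      = c - ⟪matVec (pinv P) b, b⟫ := by
  rw [quad_mem_range hP h, real_inner_comm b]
  ring

lemma quad_lower_bound (hP : Pᵀ = P)
    (h : ∀ u, 0 ≤ ⟪matVec P u, u⟫ - 2 * ⟪b, u⟫ + c) (u : EuclideanSpace ℝ (Fin n)) :
    c - ⟪matVec (pinv P) b, b⟫ ≤ ⟪matVec P u, u⟫ - 2 * ⟪b, u⟫ + c := by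
  -- Complete the square around `P⁺ b`.
  have h1 := quad_posSemidef h (u - matVec (pinv P) b)
  have h2 : ⟪matVec P u, matVec (pinv P) b⟫ = ⟪b, u⟫ := by
    rw [inner_matVec_of_symm hP, quad_mem_range hP h, real_inner_comm]
  rw [matVec_sub, quad_mem_range hP h, inner_sub_left, inner_sub_right, inner_sub_right, h2,
    real_inner_comm (matVec (pinv P) b) b] at h1
  linarith

end quadratic

/-! ### Dynamic programming -/

/-- The left-hand side of the constraint defining `GySeq`. -/
noncomputable def seqCost {m n p : ℕ} (F C : ℕ → Matrix (Fin m) (Fin n) ℝ)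
    (Hm : ℕ → Matrix (Fin p) (Fin n) ℝ) (S0 : Matrix (Fin m) (Fin m) ℝ)
    (S : ℕ → Matrix (Fin m) (Fin m) ℝ) (R : ℕ → Matrix (Fin p) (Fin p) ℝ)
    (y : ℕ → EuclideanSpace ℝ (Fin p)) (N : ℕ) (x : ℕ → EuclideanSpace ℝ (Fin n)) : ℝ :=
  ⟪matVec S0 (matVec (F 0) (x 0)), matVec (F 0) (x 0)⟫ +
      (∑ i ∈ Finset.range N,
        ⟪matVec (S i) (matVec (F (i+1)) (x (i+1)) - matVec (C i) (x i)),
          matVec (F (i+1)) (x (i+1)) - matVec (C i) (x i)⟫) +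
      (∑ i ∈ Finset.range (N+1),
        ⟪matVec (R i) (y i - matVec (Hm i) (x i)),
          y i - matVec (Hm i) (x i)⟫)

/-- The quadratic polynomial `V_k(v) = (Q_k v, v) - 2 (r_k, v) + α_k`, the minimal cost of
reaching `v` at time `k`. -/
noncomputable def valueFn {m n p : ℕ} (F C : ℕ → Matrix (Fin m) (Fin n) ℝ)
    (Hm : ℕ → Matrix (Fin p) (Fin n) ℝ) (S0 : Matrix (Fin m) (Fin m) ℝ)
    (S : ℕ → Matrix (Fin m) (Fin m) ℝ) (R : ℕ → Matrix (Fin p) (Fin p) ℝ)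
    (y : ℕ → EuclideanSpace ℝ (Fin p)) (k : ℕ) (v : EuclideanSpace ℝ (Fin n)) : ℝ :=
  ⟪matVec (Qmat F C Hm S0 S R k) v, v⟫ - 2 * ⟪rvec F C Hm S0 S R y k, v⟫ +
    alphaNum F C Hm S0 S R y k

section dynamicProgramming

variable {m n p : ℕ} {F C : ℕ → Matrix (Fin m) (Fin n) ℝ}
  {Hm : ℕ → Matrix (Fin p) (Fin n) ℝ}
  {S0 : Matrix (Fin m) (Fin m) ℝ} {S : ℕ → Matrix (Fin m) (Fin m) ℝ}
  {R : ℕ → Matrix (Fin p) (Fin p) ℝ} {y : ℕ → EuclideanSpace ℝ (Fin p)}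

lemma seqCost_succ (k : ℕ) (x : ℕ → EuclideanSpace ℝ (Fin n)) :
    seqCost F C Hm S0 S R y (k+1) x = seqCost F C Hm S0 S R y k x +
      ⟪matVec (S k) (matVec (F (k+1)) (x (k+1)) - matVec (C k) (x k)),
          matVec (F (k+1)) (x (k+1)) - matVec (C k) (x k)⟫ +
      ⟪matVec (R (k+1)) (y (k+1) - matVec (Hm (k+1)) (x (k+1))),
          y (k+1) - matVec (Hm (k+1)) (x (k+1))⟫ := by
  simp only [seqCost, Finset.sum_range_succ _ k, Finset.sum_range_succ _ (k+1)]
  ring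

lemma seqCost_congr {k : ℕ} {x z : ℕ → EuclideanSpace ℝ (Fin n)} (h : ∀ i ≤ k, x i = z i) :
    seqCost F C Hm S0 S R y k x = seqCost F C Hm S0 S R y k z := by
  unfold seqCost
  congr 1
  · congr 1
    · rw [h 0 (Nat.zero_le k)]
    · refine Finset.sum_congr rfl fun i hi => ?_
      have := Finset.mem_range.mp hi
      rw [h i (by omega), h (i+1) (by omega)]
  · refine Finset.sum_congr rfl fun i hi => ?_
    have := Finset.mem_range.mp hi
    rw [h i (by omega)]

lemma seqCost_nonneg (hS0 : S0.PosDef) (hS : ∀ k, (S k).PosDef) (hR : ∀ k, (R k).PosDef)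
    (k : ℕ) (x : ℕ → EuclideanSpace ℝ (Fin n)) : 0 ≤ seqCost F C Hm S0 S R y k x :=
  add_nonneg (add_nonneg (hS0.inner_matVec_nonneg _)
    (Finset.sum_nonneg fun i _ => (hS i).inner_matVec_nonneg _))
    (Finset.sum_nonneg fun i _ => (hR i).inner_matVec_nonneg _)

lemma Qmat_transpose (hS0 : S0.PosDef) (hS : ∀ k, (S k).PosDef) (hR : ∀ k, (R k).PosDef)
    (k : ℕ) : (Qmat F C Hm S0 S R k)ᵀ = Qmat F C Hm S0 S R k := by
  induction k with
  | zero =>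
    simp [Qmat, Matrix.transpose_mul, hS0.transpose_eq, (hR 0).transpose_eq, Matrix.mul_assoc]
  | succ k ih =>
    have hP : (Qmat F C Hm S0 S R k + (C k)ᵀ * S k * C k)ᵀ
        = Qmat F C Hm S0 S R k + (C k)ᵀ * S k * C k := by
      simp [Matrix.transpose_mul, ih, (hS k).transpose_eq, Matrix.mul_assoc]
    have hB := pinv_transpose hP
    rw [Qmat]
    generalize pinv (Qmat F C Hm S0 S R k + (C k)ᵀ * S k * C k) = B at hB ⊢
    simp [Matrix.transpose_mul, (hS k).transpose_eq, (hR (k+1)).transpose_eq, hB,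
      Matrix.mul_assoc]

lemma Pmat_transpose (hS0 : S0.PosDef) (hS : ∀ k, (S k).PosDef) (hR : ∀ k, (R k).PosDef)
    (k : ℕ) : (Pmat F C Hm S0 S R k)ᵀ = Pmat F C Hm S0 S R k := by
  simp [Pmat, Matrix.transpose_mul, Qmat_transpose hS0 hS hR, (hS k).transpose_eq,
    Matrix.mul_assoc]

lemma valueFn_zero (hR : ∀ k, (R k).PosDef) (x : ℕ → EuclideanSpace ℝ (Fin n)) :
    valueFn F C Hm S0 S R y 0 (x 0) = seqCost F C Hm S0 S R y 0 x := by
  simp only [valueFn, seqCost, Qmat, rvec, alphaNum, matVec_addMat, matVec_mul, matVec_sub,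
    inner_add_left, inner_sub_left, inner_sub_right, inner_matVec_transpose,
    Finset.sum_range_zero, zero_add, Finset.sum_range_one]
  rw [inner_matVec_of_symm (hR 0).transpose_eq (matVec (Hm 0) (x 0)) (y 0),
    real_inner_comm _ (matVec (Hm 0) (x 0))]
  ring

/-- The sum of the value at `u` and of the transition cost from `u` to `v`, as a quadratic
polynomial in `u`. -/
lemma transition_eq_quad (hS : ∀ k, (S k).PosDef) (k : ℕ) (u v : EuclideanSpace ℝ (Fin n)) :
    valueFn F C Hm S0 S R y k u +
      ⟪matVec (S k) (matVec (F (k+1)) v - matVec (C k) u),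
        matVec (F (k+1)) v - matVec (C k) u⟫ =
    ⟪matVec (Pmat F C Hm S0 S R k) u, u⟫ -
      2 * ⟪rvec F C Hm S0 S R y k + matVec (C k)ᵀ (matVec (S k) (matVec (F (k+1)) v)), u⟫ +
      (alphaNum F C Hm S0 S R y k +
        ⟪matVec (S k) (matVec (F (k+1)) v), matVec (F (k+1)) v⟫) := by
  simp only [valueFn, Pmat, matVec_addMat, matVec_mul, matVec_sub,
    inner_add_left, inner_sub_left, inner_sub_right, inner_matVec_transpose]
  rw [inner_matVec_of_symm (hS k).transpose_eq (matVec (C k) u) (matVec (F (k+1)) v),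
    real_inner_comm _ (matVec (C k) u)]
  ring

/-- `V_{k+1}(v)` is `c - (P_k⁺ b, b)`, with `b` and `c` the coefficients of the quadratic polynomial
in `transition_eq_quad`, plus the cost of the new observation. -/
lemma valueFn_succ (hS0 : S0.PosDef) (hS : ∀ k, (S k).PosDef) (hR : ∀ k, (R k).PosDef)
    (k : ℕ) (v : EuclideanSpace ℝ (Fin n)) :
    valueFn F C Hm S0 S R y (k+1) v =
      (alphaNum F C Hm S0 S R y k +
        ⟪matVec (S k) (matVec (F (k+1)) v), matVec (F (k+1)) v⟫) -
      ⟪matVec (pinv (Pmat F C Hm S0 S R k))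
          (rvec F C Hm S0 S R y k + matVec (C k)ᵀ (matVec (S k) (matVec (F (k+1)) v))),
        rvec F C Hm S0 S R y k + matVec (C k)ᵀ (matVec (S k) (matVec (F (k+1)) v))⟫ +
      ⟪matVec (R (k+1)) (y (k+1) - matVec (Hm (k+1)) v), y (k+1) - matVec (Hm (k+1)) v⟫ := by
  have hpinv := pinv_transpose (Pmat_transpose (F := F) (C := C) (Hm := Hm) hS0 hS hR k)
  have hQ : Qmat F C Hm S0 S R (k+1) = (Hm (k+1))ᵀ * R (k+1) * Hm (k+1) +
      (F (k+1))ᵀ * (S k - S k * C k * pinv (Pmat F C Hm S0 S R k) * (C k)ᵀ * S k) *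
        F (k+1) := rfl
  rw [valueFn, hQ, rvec, alphaNum]
  set B := pinv (Pmat F C Hm S0 S R k)
  set r := rvec F C Hm S0 S R y k
  set f := matVec (F (k+1)) v with hf
  set h := matVec (Hm (k+1)) v with hh
  set d := matVec (C k)ᵀ (matVec (S k) f) with hd
  -- Every inner product is brought to the form `⟪B _, _⟫`, `⟪S _, _⟫` or `⟪R _, _⟫`.
  have e1 : ⟪matVec (S k) (matVec (C k) (matVec B d)), f⟫ = ⟪matVec B d, d⟫ := by
    rw [inner_matVec_of_symm (hS k).transpose_eq, hd, real_inner_comm,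
      ← inner_matVec_transpose, ← hd, real_inner_comm]
  have e2 : ⟪matVec (S k) (matVec (C k) (matVec B r)), f⟫ = ⟪matVec B r, d⟫ := by
    rw [inner_matVec_of_symm (hS k).transpose_eq, real_inner_comm,
      ← inner_matVec_transpose, ← hd, real_inner_comm]
  have e3 : ⟪matVec B d, r⟫ = ⟪matVec B r, d⟫ := by
    rw [inner_matVec_of_symm hpinv, real_inner_comm]
  have e4 : ⟪matVec (R (k+1)) h, y (k+1)⟫ = ⟪matVec (R (k+1)) (y (k+1)), h⟫ := by
    rw [inner_matVec_of_symm (hR (k+1)).transpose_eq, real_inner_comm]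
  simp only [matVec_addMat, matVec_subMat, matVec_mul, matVec_sub, matVec_add,
    inner_add_left, inner_add_right, inner_sub_left, inner_sub_right, inner_matVec_transpose,
    ← hf, ← hh, ← hd, e1, e2, e3, e4]
  ring

lemma exists_cost_eq_valueFn (hS0 : S0.PosDef) (hS : ∀ k, (S k).PosDef)
    (hR : ∀ k, (R k).PosDef) (k : ℕ) (v : EuclideanSpace ℝ (Fin n)) :
    ∃ x : ℕ → EuclideanSpace ℝ (Fin n),
      x k = v ∧ seqCost F C Hm S0 S R y k x = valueFn F C Hm S0 S R y k v := by
  induction k generalizing v with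
  | zero => exact ⟨fun _ => v, rfl, (valueFn_zero hR _).symm⟩
  | succ k ih =>
    set b := rvec F C Hm S0 S R y k + matVec (C k)ᵀ (matVec (S k) (matVec (F (k+1)) v)) with hb
    have hquad : ∀ u, 0 ≤ ⟪matVec (Pmat F C Hm S0 S R k) u, u⟫ - 2 * ⟪b, u⟫ +
        (alphaNum F C Hm S0 S R y k +
          ⟪matVec (S k) (matVec (F (k+1)) v), matVec (F (k+1)) v⟫) := by
      intro u
      rw [hb, ← transition_eq_quad hS]
      obtain ⟨z, -, hz⟩ := ih u
      rw [← hz]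
      exact add_nonneg (seqCost_nonneg hS0 hS hR k z) ((hS k).inner_matVec_nonneg _)
    -- The optimal predecessor of `v` is `P_k⁺ b`.
    obtain ⟨z, hzk, hz⟩ := ih (matVec (pinv (Pmat F C Hm S0 S R k)) b)
    refine ⟨Function.update z (k+1) v, Function.update_self _ _ _, ?_⟩
    have hne : ∀ i ≤ k, Function.update z (k+1) v i = z i := fun i hi =>
      Function.update_of_ne (by omega) _ _
    rw [seqCost_succ, seqCost_congr hne, hne k le_rfl, Function.update_self, hz, hzk,
      transition_eq_quad hS, valueFn_succ hS0 hS hR, ← hb,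
      quad_value_at_pinv (Pmat_transpose hS0 hS hR k) hquad]

lemma valueFn_nonneg (hS0 : S0.PosDef) (hS : ∀ k, (S k).PosDef) (hR : ∀ k, (R k).PosDef)
    (k : ℕ) (v : EuclideanSpace ℝ (Fin n)) : 0 ≤ valueFn F C Hm S0 S R y k v := by
  obtain ⟨x, -, hx⟩ := exists_cost_eq_valueFn (F := F) (C := C) (Hm := Hm) (y := y) hS0 hS hR k v
  exact hx ▸ seqCost_nonneg hS0 hS hR k x

lemma valueFn_le_cost (hS0 : S0.PosDef) (hS : ∀ k, (S k).PosDef) (hR : ∀ k, (R k).PosDef)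
    (k : ℕ) (x : ℕ → EuclideanSpace ℝ (Fin n)) :
    valueFn F C Hm S0 S R y k (x k) ≤ seqCost F C Hm S0 S R y k x := by
  induction k with
  | zero => exact (valueFn_zero hR x).le
  | succ k ih =>
    rw [seqCost_succ, valueFn_succ hS0 hS hR]
    refine add_le_add (le_trans ?_ (add_le_add ih le_rfl)) le_rfl
    rw [transition_eq_quad hS]
    refine quad_lower_bound (Pmat_transpose hS0 hS hR k) (fun u => ?_) (x k)
    rw [← transition_eq_quad hS]
    exact add_nonneg (valueFn_nonneg hS0 hS hR k u) ((hS k).inner_matVec_nonneg _)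

end dynamicProgramming

/-!
**Proposition 3 (description of the reachable section):** if `rank Q_N = n`
then the section `P_N` of the a posteriori set in the state space is the
ellipsoid `{x : (Q_N x, x) − 2(Q_N x̂_N, x) + α_N ≤ 1}`, `x̂_N = Q_N⁺ r_N`.
-/

/-- **Proposition 3 (the set `P_N` is an ellipsoid).** -/
theorem aposteriori_section_is_ellipsoid {m n p : ℕ}
    (F C : ℕ → Matrix (Fin m) (Fin n) ℝ)
    (Hm : ℕ → Matrix (Fin p) (Fin n) ℝ)
    (S0 : Matrix (Fin m) (Fin m) ℝ) (hS0 : S0.PosDef)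
    (S : ℕ → Matrix (Fin m) (Fin m) ℝ) (hS : ∀ k, (S k).PosDef)
    (R : ℕ → Matrix (Fin p) (Fin p) ℝ) (hR : ∀ k, (R k).PosDef)
    (y : ℕ → EuclideanSpace ℝ (Fin p)) (N : ℕ)
    (hne : (GySeq F C Hm S0 S R y N).Nonempty)
    (hrank : (Qmat F C Hm S0 S R N).rank = n) :
    {v : EuclideanSpace ℝ (Fin n) |
        ∃ x ∈ GySeq F C Hm S0 S R y N, x N = v} =
      {v : EuclideanSpace ℝ (Fin n) |
        ⟪matVec (Qmat F C Hm S0 S R N) v, v⟫ -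
          2 * ⟪matVec (Qmat F C Hm S0 S R N)
              (matVec (pinv (Qmat F C Hm S0 S R N)) (rvec F C Hm S0 S R y N)),
            v⟫ +
          alphaNum F C Hm S0 S R y N ≤ 1} := by
  have hr : matVec (Qmat F C Hm S0 S R N)
      (matVec (pinv (Qmat F C Hm S0 S R N)) (rvec F C Hm S0 S R y N)) = rvec F C Hm S0 S R y N :=
    quad_mem_range (Qmat_transpose hS0 hS hR N) (valueFn_nonneg hS0 hS hR N)
  rw [hr]
  ext v
  constructor
  · rintro ⟨x, hx, rfl⟩
    exact (valueFn_le_cost hS0 hS hR N x).trans hx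
  · intro hv
    obtain ⟨x, hxv, hx⟩ :=
      exists_cost_eq_valueFn (F := F) (C := C) (Hm := Hm) (y := y) hS0 hS hR N v
    exact ⟨x, hx.trans_le hv, hxv⟩
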